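/- arXiv:1301.6409 — 4 statements merged into one kernel-verified Lean document; each statement's English description precedes it below -/
import Mathlib

section
/- Under Assumptions 1 and 2, let t₀ ∈ [0,1], x₀, w₀ ∈ ℝⁿ, d₀ := ‖x₀ − w₀‖, let (𝐮,𝐯) ∈ 𝒰 × 𝒱, let (u*,v*) be optimal in Γ(t₀, x₀, x₀ − w₀), and set 𝐱(t) := x[t₀, x₀, 𝐮, v*](t) and 𝐰(t) := x[t₀, w₀, u*, 𝐯](t). Then for all s ∈ [t₀,1] and all (u,v) ∈ U × V: ⟨x₀ − w₀, f(s, 𝐱(s), u, v*) − f(s, 𝐰(s), u*, v)⟩ ≤ 2C(s)·d₀ + c·d₀², where C(s) := c(1 + ‖f‖)(s − t₀). -/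
open Set MeasureTheory Metric

noncomputable section

/-- `Evec n` is the euclidean space `ℝⁿ`. -/
abbrev Evec (n : ℕ) : Type := EuclideanSpace ℝ (Fin n)

/-- A (measurable) control with values in the set `K`. -/
def IsControl {d : ℕ} (K : Set (Evec d)) (u : ℝ → Evec d) : Prop :=
  Measurable u ∧ ∀ t, u t ∈ K

/-- Assumption 1: `U`, `V` are nonempty compact sets, `f` is bounded (in norm) by `Mf`
on `[0,1] × ℝⁿ × U × V`, and `f` is `c`-Lipschitz in `(t,x)`, uniformly in `(u,v)`. -/
structure Assumption1 {n p q : ℕ} (f : ℝ → Evec n → Evec p → Evec q → Evec n)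
    (U : Set (Evec p)) (V : Set (Evec q)) (Mf c : ℝ) : Prop where
  compactU : IsCompact U
  nonemptyU : U.Nonempty
  compactV : IsCompact V
  nonemptyV : V.Nonempty
  Mf_nonneg : 0 ≤ Mf
  c_nonneg : 0 ≤ c
  bounded : ∀ t ∈ Icc (0:ℝ) 1, ∀ (x : Evec n), ∀ u ∈ U, ∀ v ∈ V, ‖f t x u v‖ ≤ Mf
  lipschitz : ∀ s ∈ Icc (0:ℝ) 1, ∀ t ∈ Icc (0:ℝ) 1, ∀ (x y : Evec n), ∀ u ∈ U, ∀ v ∈ V,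
      ‖f t x u v - f s y u v‖ ≤ c * (|t - s| + ‖x - y‖)

/-- `sol` is a solution operator for the dynamics `ż(t) = f(t,z(t),u(t),v(t))`:
for any initial time `t₀ ∈ [0,1]`, initial state `z₀` and controls `(u,v)`,
`sol t₀ z₀ u v` solves the corresponding integral equation on `[t₀,1]`. -/
def IsSolOp {n p q : ℕ} (f : ℝ → Evec n → Evec p → Evec q → Evec n)
    (U : Set (Evec p)) (V : Set (Evec q))
    (sol : ℝ → Evec n → (ℝ → Evec p) → (ℝ → Evec q) → ℝ → Evec n) : Prop :=
  ∀ t₀ ∈ Icc (0:ℝ) 1, ∀ (z₀ : Evec n) (u : ℝ → Evec p) (v : ℝ → Evec q),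
    IsControl U u → IsControl V v →
      sol t₀ z₀ u v t₀ = z₀ ∧
      ∀ t ∈ Icc t₀ 1,
        sol t₀ z₀ u v t = z₀ + ∫ s in t₀..t, f s (sol t₀ z₀ u v s) (u s) (v s)

/-- The maxmin `H⁻(t,x,ξ) = sup_{u ∈ U} inf_{v ∈ V} ⟨ξ, f(t,x,u,v)⟩` of the local game. -/
def Hm {n p q : ℕ} (f : ℝ → Evec n → Evec p → Evec q → Evec n)
    (U : Set (Evec p)) (V : Set (Evec q)) (t : ℝ) (x ξ : Evec n) : ℝ :=
  ⨆ u : U, ⨅ v : V, (inner ℝ ξ (f t x (↑u) (↑v)) : ℝ)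

/-- The minmax `H⁺(t,x,ξ) = inf_{v ∈ V} sup_{u ∈ U} ⟨ξ, f(t,x,u,v)⟩` of the local game. -/
def Hp {n p q : ℕ} (f : ℝ → Evec n → Evec p → Evec q → Evec n)
    (U : Set (Evec p)) (V : Set (Evec q)) (t : ℝ) (x ξ : Evec n) : ℝ :=
  ⨅ v : V, ⨆ u : U, (inner ℝ ξ (f t x (↑u) (↑v)) : ℝ)

/-- `ustar` is an optimal action of player 1 in the local game `Γ(t,x,ξ)`:
it attains the max in `H⁻(t,x,ξ)`. -/
def OptimalU {n p q : ℕ} (f : ℝ → Evec n → Evec p → Evec q → Evec n)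
    (U : Set (Evec p)) (V : Set (Evec q)) (t : ℝ) (x ξ : Evec n) (ustar : Evec p) : Prop :=
  ustar ∈ U ∧ (⨅ v : V, (inner ℝ ξ (f t x ustar (↑v)) : ℝ)) = Hm f U V t x ξ

/-- `vstar` is an optimal action of player 2 in the local game `Γ(t,x,ξ)`:
it attains the min in `H⁺(t,x,ξ)`. -/
def OptimalV {n p q : ℕ} (f : ℝ → Evec n → Evec p → Evec q → Evec n)
    (U : Set (Evec p)) (V : Set (Evec q)) (t : ℝ) (x ξ : Evec n) (vstar : Evec q) : Prop :=
  vstar ∈ V ∧ (⨆ u : U, (inner ℝ ξ (f t x (↑u) vstar) : ℝ)) = Hp f U V t x ξ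

/-- Assumption 2 (Isaacs' condition): every local game has a value. -/
def Isaacs {n p q : ℕ} (f : ℝ → Evec n → Evec p → Evec q → Evec n)
    (U : Set (Evec p)) (V : Set (Evec q)) : Prop :=
  ∀ t ∈ Icc (0:ℝ) 1, ∀ x ξ : Evec n, Hm f U V t x ξ = Hp f U V t x ξ

/-- The time-`t` section `𝒲(t)` of a set `𝒲 ⊆ ℝ × ℝⁿ`. -/
def sec {n : ℕ} (W : Set (ℝ × Evec n)) (t : ℝ) : Set (Evec n) := {x | (t, x) ∈ W}

/-- Property P1: every section `𝒲(t)`, `t ∈ [t₀,1]`, is closed and nonempty. -/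
def PropP1 {n : ℕ} (t₀ : ℝ) (W : Set (ℝ × Evec n)) : Prop :=
  ∀ t ∈ Icc t₀ 1, IsClosed (sec W t) ∧ (sec W t).Nonempty

/-- Property P2: for every `(t,x) ∈ 𝒲` and `t' ∈ [t,1]`,
`sup_{u ∈ U} inf_{𝐯 ∈ 𝒱} D(x[t,x,u,𝐯](t'), 𝒲(t')) = 0` (stated using that the
distance is nonnegative: every player-1 constant control `u` admits ε-good replies). -/
def PropP2 {n p q : ℕ} (U : Set (Evec p)) (V : Set (Evec q))
    (sol : ℝ → Evec n → (ℝ → Evec p) → (ℝ → Evec q) → ℝ → Evec n)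
    (W : Set (ℝ × Evec n)) : Prop :=
  ∀ t x, (t, x) ∈ W → ∀ t' ∈ Icc t 1, ∀ u ∈ U, ∀ ε > 0,
    ∃ vc : ℝ → Evec q, IsControl V vc ∧
      infDist (sol t x (fun _ => u) vc t') (sec W t') < ε


/-- the Claim in the proof of Lemma 1: for all `s ∈ [t₀,1]` and all
`(u,v) ∈ U × V`, `⟨x₀-w₀, f(s,𝐱(s),u,v*) - f(s,𝐰(s),u*,v)⟩ ≤ 2C(s)d₀ + c d₀²`,
where `C(s) = c(1+‖f‖)(s-t₀)` and `d₀ = ‖x₀-w₀‖`. -/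
theorem statement1 {n p q : ℕ}
    (f : ℝ → Evec n → Evec p → Evec q → Evec n)
    (U : Set (Evec p)) (V : Set (Evec q)) (Mf c : ℝ)
    (hA1 : Assumption1 f U V Mf c)
    (hA2 : Isaacs f U V)
    (sol : ℝ → Evec n → (ℝ → Evec p) → (ℝ → Evec q) → ℝ → Evec n)
    (hsol : IsSolOp f U V sol)
    (t₀ : ℝ) (ht₀ : t₀ ∈ Icc (0:ℝ) 1)
    (x₀ w₀ : Evec n)
    (uc : ℝ → Evec p) (vc : ℝ → Evec q)
    (huc : IsControl U uc) (hvc : IsControl V vc)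
    (ustar : Evec p) (vstar : Evec q)
    (hustar : OptimalU f U V t₀ x₀ (x₀ - w₀) ustar)
    (hvstar : OptimalV f U V t₀ x₀ (x₀ - w₀) vstar) :
    ∀ s ∈ Icc t₀ 1, ∀ u ∈ U, ∀ v ∈ V,
      (inner ℝ (x₀ - w₀)
          (f s (sol t₀ x₀ uc (fun _ => vstar) s) u vstar -
            f s (sol t₀ w₀ (fun _ => ustar) vc s) ustar v) : ℝ) ≤
        2 * (c * (1 + Mf) * (s - t₀)) * ‖x₀ - w₀‖ + c * ‖x₀ - w₀‖ ^ 2 := by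
  intro s hs u hu v hv
  have hs1 : s ∈ Icc (0:ℝ) 1 := ⟨ht₀.1.trans hs.1, hs.2⟩
  have hst : 0 ≤ s - t₀ := sub_nonneg.2 hs.1
  -- a priori bound on trajectories
  have traj : ∀ (z₀ : Evec n) (a : ℝ → Evec p) (b : ℝ → Evec q), IsControl U a →
      IsControl V b → ‖sol t₀ z₀ a b s - z₀‖ ≤ Mf * (s - t₀) := by
    intro z₀ a b ha hb
    have h := (hsol t₀ ht₀ z₀ a b ha hb).2 s hs
    have h2 : sol t₀ z₀ a b s - z₀ = ∫ r in t₀..s, f r (sol t₀ z₀ a b r) (a r) (b r) := by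
      rw [sub_eq_iff_eq_add', ← h]
    rw [h2]
    have h3 := intervalIntegral.norm_integral_le_of_norm_le_const
      (f := fun r => f r (sol t₀ z₀ a b r) (a r) (b r)) (a := t₀) (b := s) (C := Mf) (by
        intro r hr
        rw [uIoc_of_le hs.1] at hr
        exact hA1.bounded r ⟨ht₀.1.trans hr.1.le, hr.2.trans hs.2⟩ _ _ (ha.2 r) _ (hb.2 r))
    rwa [abs_of_nonneg hst] at h3
  have hx := traj x₀ uc (fun _ => vstar) huc ⟨measurable_const, fun _ => hvstar.1⟩
  have hw := traj w₀ (fun _ => ustar) vc ⟨measurable_const, fun _ => hustar.1⟩ hvc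
  set X := sol t₀ x₀ uc (fun _ => vstar) s
  set W := sol t₀ w₀ (fun _ => ustar) vc s
  have hc := hA1.c_nonneg
  have hL1 : ‖f s X u vstar - f t₀ x₀ u vstar‖ ≤ c * ((s - t₀) + Mf * (s - t₀)) := by
    refine (hA1.lipschitz t₀ ht₀ s hs1 X x₀ u hu vstar hvstar.1).trans ?_
    rw [abs_of_nonneg hst]
    gcongr
  have hL2 : ‖f t₀ x₀ ustar v - f s W ustar v‖
      ≤ c * ((s - t₀) + (Mf * (s - t₀) + ‖x₀ - w₀‖)) := by
    rw [norm_sub_rev]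
    refine (hA1.lipschitz t₀ ht₀ s hs1 W x₀ ustar hustar.1 v hv).trans ?_
    rw [abs_of_nonneg hst]
    have h4 : ‖W - x₀‖ ≤ ‖W - w₀‖ + ‖x₀ - w₀‖ := by
      rw [norm_sub_rev x₀ w₀]
      exact norm_sub_le_norm_sub_add_norm_sub _ _ _
    gcongr
    linarith
  -- the local game
  have bd : ∀ u ∈ U, ∀ v ∈ V,
      |(inner ℝ (x₀ - w₀) (f t₀ x₀ u v) : ℝ)| ≤ ‖x₀ - w₀‖ * Mf := by
    intro u hu v hv
    refine (abs_real_inner_le_norm _ _).trans ?_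
    have := hA1.bounded t₀ ht₀ x₀ u hu v hv
    gcongr
  have g1 : (inner ℝ (x₀ - w₀) (f t₀ x₀ u vstar) : ℝ) ≤ Hp f U V t₀ x₀ (x₀ - w₀) := by
    rw [← hvstar.2]
    refine le_ciSup (f := fun u : U => (inner ℝ (x₀ - w₀) (f t₀ x₀ (↑u) vstar) : ℝ))
      ⟨‖x₀ - w₀‖ * Mf, ?_⟩ ⟨u, hu⟩
    rintro _ ⟨a, rfl⟩
    exact (abs_le.1 (bd a a.2 vstar hvstar.1)).2
  have g2 : Hm f U V t₀ x₀ (x₀ - w₀) ≤ (inner ℝ (x₀ - w₀) (f t₀ x₀ ustar v) : ℝ) := by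
    rw [← hustar.2]
    refine ciInf_le (f := fun v : V => (inner ℝ (x₀ - w₀) (f t₀ x₀ ustar (↑v)) : ℝ))
      ⟨-(‖x₀ - w₀‖ * Mf), ?_⟩ ⟨v, hv⟩
    rintro _ ⟨a, rfl⟩
    exact (abs_le.1 (bd ustar hustar.1 a a.2)).1
  have hI := hA2 t₀ ht₀ x₀ (x₀ - w₀)
  have e1 := (real_inner_le_norm (x₀ - w₀) (f s X u vstar - f t₀ x₀ u vstar)).trans
    (mul_le_mul_of_nonneg_left hL1 (norm_nonneg _))
  have e2 := (real_inner_le_norm (x₀ - w₀) (f t₀ x₀ ustar v - f s W ustar v)).trans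
    (mul_le_mul_of_nonneg_left hL2 (norm_nonneg _))
  rw [inner_sub_right] at e1 e2 ⊢
  nlinarith [e1, e2, g1, g2, hI]
end
end

section
/- Under Assumption 1, let t₀ ∈ [0,1], x₀, w₀ ∈ ℝⁿ, d₀ := ‖x₀ − w₀‖, let 𝐮 ∈ 𝒰 be a control, let v* ∈ V attain the min in H⁺(t₀, x₀, x₀ − w₀), and set 𝐱(t) := x[t₀, x₀, 𝐮, v*](t). Then for all s ∈ [t₀,1] and all u ∈ U: ⟨x₀ − w₀, f(s, 𝐱(s), u, v*)⟩ ≤ H⁺(t₀, x₀, x₀ − w₀) + C(s)·d₀, where C(s) := c(1 + ‖f‖)(s − t₀). -/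
open Set MeasureTheory Metric

noncomputable section

/-- if `v*` attains the min in `H⁺(t₀,x₀,x₀-w₀)` and
`𝐱(t) = x[t₀,x₀,𝐮,v*](t)`, then for all `s ∈ [t₀,1]` and `u ∈ U`,
`⟨x₀-w₀, f(s,𝐱(s),u,v*)⟩ ≤ H⁺(t₀,x₀,x₀-w₀) + C(s)·d₀` with `C(s) = c(1+‖f‖)(s-t₀)`. -/
theorem statement2 {n p q : ℕ}
    (f : ℝ → Evec n → Evec p → Evec q → Evec n)
    (U : Set (Evec p)) (V : Set (Evec q)) (Mf c : ℝ)
    (hA1 : Assumption1 f U V Mf c)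
    (sol : ℝ → Evec n → (ℝ → Evec p) → (ℝ → Evec q) → ℝ → Evec n)
    (hsol : IsSolOp f U V sol)
    (t₀ : ℝ) (ht₀ : t₀ ∈ Icc (0:ℝ) 1)
    (x₀ w₀ : Evec n)
    (uc : ℝ → Evec p) (huc : IsControl U uc)
    (vstar : Evec q)
    (hvstar : OptimalV f U V t₀ x₀ (x₀ - w₀) vstar) :
    ∀ s ∈ Icc t₀ 1, ∀ u ∈ U,
      (inner ℝ (x₀ - w₀) (f s (sol t₀ x₀ uc (fun _ => vstar) s) u vstar) : ℝ) ≤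
        Hp f U V t₀ x₀ (x₀ - w₀) + (c * (1 + Mf) * (s - t₀)) * ‖x₀ - w₀‖ := by
  intro s hs u hu
  obtain ⟨hv, hsup⟩ := hvstar
  have hs1 : s ∈ Icc (0:ℝ) 1 := ⟨ht₀.1.trans hs.1, hs.2⟩
  have hvc : IsControl V (fun _ : ℝ => vstar) := ⟨measurable_const, fun _ => hv⟩
  set X := sol t₀ x₀ uc (fun _ => vstar) with hX
  have hXs : X s = x₀ + ∫ r in t₀..s, f r (X r) (uc r) vstar :=
    (hsol t₀ ht₀ x₀ uc (fun _ => vstar) huc hvc).2 s hs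
  have hdist : ‖X s - x₀‖ ≤ Mf * (s - t₀) := by
    have h1 : ‖∫ r in t₀..s, f r (X r) (uc r) vstar‖ ≤ Mf * |s - t₀| := by
      apply intervalIntegral.norm_integral_le_of_norm_le_const
      intro r hr
      rw [uIoc_of_le hs.1] at hr
      exact hA1.bounded r ⟨ht₀.1.trans hr.1.le, hr.2.trans hs.2⟩ _ _ (huc.2 r) _ hv
    rw [abs_of_nonneg (sub_nonneg.2 hs.1)] at h1
    rw [hXs, add_sub_cancel_left]
    exact h1
  have hlip := hA1.lipschitz t₀ ht₀ s hs1 (X s) x₀ u hu vstar hv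
  rw [abs_of_nonneg (sub_nonneg.2 hs.1)] at hlip
  have hlip2 : ‖f s (X s) u vstar - f t₀ x₀ u vstar‖ ≤ c * (1 + Mf) * (s - t₀) := by
    have := mul_le_mul_of_nonneg_left hdist hA1.c_nonneg
    nlinarith
  have hbdd : BddAbove (range fun u : U => (inner ℝ (x₀ - w₀) (f t₀ x₀ (↑u) vstar) : ℝ)) := by
    refine ⟨‖x₀ - w₀‖ * Mf, ?_⟩
    rintro _ ⟨a, rfl⟩
    exact (real_inner_le_norm _ _).trans
      (mul_le_mul_of_nonneg_left (hA1.bounded t₀ ht₀ _ _ a.2 _ hv) (norm_nonneg _))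
  have hH : (inner ℝ (x₀ - w₀) (f t₀ x₀ u vstar) : ℝ) ≤ Hp f U V t₀ x₀ (x₀ - w₀) := by
    rw [← hsup]
    exact le_ciSup hbdd ⟨u, hu⟩
  have hin := real_inner_le_norm (x₀ - w₀) (f s (X s) u vstar - f t₀ x₀ u vstar)
  rw [inner_sub_right] at hin
  have := mul_le_mul_of_nonneg_left hlip2 (norm_nonneg (x₀ - w₀))
  linarith
end
end

section
/- Under Assumption 1, let t₀ ∈ [0,1], x₀, w₀ ∈ ℝⁿ, d₀ := ‖x₀ − w₀‖, let 𝐯 ∈ 𝒱 be a control, let u* ∈ U attain the max in H⁻(t₀, x₀, x₀ − w₀), and set 𝐰(t) := x[t₀, w₀, u*, 𝐯](t). Then for all s ∈ [t₀,1] and all v ∈ V: ⟨x₀ − w₀, f(s, 𝐰(s), u*, v)⟩ ≥ H⁻(t₀, x₀, x₀ − w₀) − C(s)·d₀ − c·d₀², where C(s) := c(1 + ‖f‖)(s − t₀). -/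
open Set MeasureTheory Metric

noncomputable section

/-- if `u*` attains the max in `H⁻(t₀,x₀,x₀-w₀)` and
`𝐰(t) = x[t₀,w₀,u*,𝐯](t)`, then for all `s ∈ [t₀,1]` and `v ∈ V`,
`⟨x₀-w₀, f(s,𝐰(s),u*,v)⟩ ≥ H⁻(t₀,x₀,x₀-w₀) - C(s)·d₀ - c·d₀²`
with `C(s) = c(1+‖f‖)(s-t₀)` and `d₀ = ‖x₀-w₀‖`. -/
theorem statement3 {n p q : ℕ}
    (f : ℝ → Evec n → Evec p → Evec q → Evec n)
    (U : Set (Evec p)) (V : Set (Evec q)) (Mf c : ℝ)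
    (hA1 : Assumption1 f U V Mf c)
    (sol : ℝ → Evec n → (ℝ → Evec p) → (ℝ → Evec q) → ℝ → Evec n)
    (hsol : IsSolOp f U V sol)
    (t₀ : ℝ) (ht₀ : t₀ ∈ Icc (0:ℝ) 1)
    (x₀ w₀ : Evec n)
    (vc : ℝ → Evec q) (hvc : IsControl V vc)
    (ustar : Evec p)
    (hustar : OptimalU f U V t₀ x₀ (x₀ - w₀) ustar) :
    ∀ s ∈ Icc t₀ 1, ∀ v ∈ V,
      Hm f U V t₀ x₀ (x₀ - w₀) - (c * (1 + Mf) * (s - t₀)) * ‖x₀ - w₀‖ -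
          c * ‖x₀ - w₀‖ ^ 2 ≤
        (inner ℝ (x₀ - w₀) (f s (sol t₀ w₀ (fun _ => ustar) vc s) ustar v) : ℝ) := by
  intro s hs v hv
  obtain ⟨hu, hopt⟩ := hustar
  have hs01 : s ∈ Icc (0:ℝ) 1 := ⟨ht₀.1.trans hs.1, hs.2⟩
  obtain ⟨-, hint⟩ := hsol t₀ ht₀ w₀ (fun _ => ustar) vc ⟨measurable_const, fun _ => hu⟩ hvc
  have hw := hint s hs
  set w := sol t₀ w₀ (fun _ => ustar) vc with hwdef
  have hdist : ‖w s - w₀‖ ≤ Mf * (s - t₀) := by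
    rw [hw, add_sub_cancel_left]
    have h := intervalIntegral.norm_integral_le_of_norm_le_const (a := t₀) (b := s) (C := Mf)
      (f := fun r => f r (w r) ustar (vc r)) (by
        intro r hr
        rw [uIoc_of_le hs.1] at hr
        exact hA1.bounded r ⟨ht₀.1.trans hr.1.le, hr.2.trans hs.2⟩ _ _ hu _ (hvc.2 r))
    rwa [abs_of_nonneg (sub_nonneg.2 hs.1)] at h
  have hH : Hm f U V t₀ x₀ (x₀ - w₀) ≤ inner ℝ (x₀ - w₀) (f t₀ x₀ ustar v) := by
    rw [← hopt]
    refine ciInf_le (f := fun v : V => (inner ℝ (x₀ - w₀) (f t₀ x₀ ustar (v : Evec q)) : ℝ))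
      ⟨-(‖x₀ - w₀‖ * Mf), ?_⟩ ⟨v, hv⟩
    rintro _ ⟨v', rfl⟩
    have h1 := abs_real_inner_le_norm (x₀ - w₀) (f t₀ x₀ ustar (v' : Evec q))
    have h2 := mul_le_mul_of_nonneg_left (hA1.bounded t₀ ht₀ x₀ ustar hu v' v'.2)
      (norm_nonneg (x₀ - w₀))
    exact (neg_le_neg (h1.trans h2)).trans (neg_abs_le _)
  have hL := hA1.lipschitz s hs01 t₀ ht₀ x₀ (w s) ustar hu v hv
  have habs : |t₀ - s| = s - t₀ := by
    rw [abs_sub_comm, abs_of_nonneg (sub_nonneg.2 hs.1)]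
  rw [habs] at hL
  have htri : ‖x₀ - w s‖ ≤ ‖x₀ - w₀‖ + Mf * (s - t₀) := by
    have h := norm_sub_le_norm_sub_add_norm_sub x₀ w₀ (w s)
    rw [norm_sub_rev w₀] at h
    linarith
  have hL2 : ‖f t₀ x₀ ustar v - f s (w s) ustar v‖
      ≤ c * ((s - t₀) + (‖x₀ - w₀‖ + Mf * (s - t₀))) :=
    hL.trans (mul_le_mul_of_nonneg_left (by linarith) hA1.c_nonneg)
  have hin := real_inner_le_norm (x₀ - w₀) (f t₀ x₀ ustar v - f s (w s) ustar v)
  rw [inner_sub_right] at hin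
  have h3 := mul_le_mul_of_nonneg_left hL2 (norm_nonneg (x₀ - w₀))
  nlinarith [hin, h3, hH]
end
end

section
/- Under Assumption 1, let t₀ ∈ [0,1], x₀ ∈ ℝⁿ, and let φ : [t₀,1] × ℝⁿ → ℝ satisfy properties (i) and (ii). Then for every ℓ ≥ φ(t₀,x₀), the ℓ-level set 𝒲^φ_ℓ := {(t,x) ∈ [t₀,1] × ℝⁿ : φ(t,x) ≤ ℓ} satisfies P1 and P2, i.e.: 𝒲^φ_ℓ(t) is closed and nonempty for every t ∈ [t₀,1], and for every (t,x) ∈ 𝒲^φ_ℓ and t' ∈ [t,1], sup_{u∈U} inf_{𝐯∈𝒱} D(x[t,x,u,𝐯](t'), 𝒲^φ_ℓ(t')) = 0. -/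
open Set MeasureTheory Metric

noncomputable section

/-- Property (i): `x ↦ φ(t,x)` is lower semicontinuous for every `t ∈ [t₀,1]`. -/
def PhiI {n : ℕ} (t₀ : ℝ) (φ : ℝ → Evec n → ℝ) : Prop :=
  ∀ t ∈ Icc t₀ 1, LowerSemicontinuous (φ t)

/-- Property (ii): `φ(t,x) ≥ sup_{u ∈ U} inf_{𝐯 ∈ 𝒱} φ(t', x[t,x,u,𝐯](t'))`
for all `(t,x)` and `t' ∈ [t,1]` (stated via ε-good replies, which is equivalent). -/
def PhiII {n p q : ℕ} (U : Set (Evec p)) (V : Set (Evec q))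
    (sol : ℝ → Evec n → (ℝ → Evec p) → (ℝ → Evec q) → ℝ → Evec n)
    (t₀ : ℝ) (φ : ℝ → Evec n → ℝ) : Prop :=
  ∀ t ∈ Icc t₀ 1, ∀ x : Evec n, ∀ t' ∈ Icc t 1, ∀ u ∈ U, ∀ ε > 0,
    ∃ vc : ℝ → Evec q, IsControl V vc ∧
      φ t' (sol t x (fun _ => u) vc t') ≤ φ t x + ε

/-- Property (iii): `φ(1,·) ≥ g`. -/
def PhiIII {n : ℕ} (g : Evec n → ℝ) (φ : ℝ → Evec n → ℝ) : Prop :=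
  ∀ x : Evec n, g x ≤ φ 1 x


/-- Limit points of almost optimal replies. -/
theorem exists_limit_reply {n p q : ℕ}
    (f : ℝ → Evec n → Evec p → Evec q → Evec n)
    (U : Set (Evec p)) (V : Set (Evec q)) (Mf c : ℝ)
    (hA1 : Assumption1 f U V Mf c)
    (sol : ℝ → Evec n → (ℝ → Evec p) → (ℝ → Evec q) → ℝ → Evec n)
    (hsol : IsSolOp f U V sol)
    (t₀ : ℝ) (ht₀ : t₀ ∈ Icc (0:ℝ) 1)
    (φ : ℝ → Evec n → ℝ)
    (hφ1 : PhiI t₀ φ) (hφ2 : PhiII U V sol t₀ φ) (ℓ t : ℝ) (ht : t ∈ Icc t₀ 1)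
    (x : Evec n) (hx : φ t x ≤ ℓ) (t' : ℝ) (ht' : t' ∈ Icc t 1) (u : Evec p) (hu : u ∈ U) :
    ∃ y, φ t' y ≤ ℓ ∧ ∀ ε > 0, ∃ vc : ℝ → Evec q, IsControl V vc ∧
      dist (sol t x (fun _ => u) vc t') y < ε := by
  have h := fun k : ℕ => hφ2 t ht x t' ht' u hu (1 / ((k : ℝ) + 1)) (by positivity)
  choose vc hvc hle using h
  have ht01 : t ∈ Icc (0:ℝ) 1 := ⟨ht₀.1.trans ht.1, ht.2⟩
  have hball : ∀ k, sol t x (fun _ => u) (vc k) t' ∈ closedBall x (Mf * |t' - t|) := by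
    intro k
    have h1 := (hsol t ht01 x (fun _ => u) (vc k) ⟨measurable_const, fun _ => hu⟩ (hvc k)).2 t' ht'
    rw [mem_closedBall, dist_eq_norm, h1, add_sub_cancel_left]
    apply intervalIntegral.norm_integral_le_of_norm_le_const
    intro s hs
    rw [uIoc_of_le ht'.1] at hs
    exact hA1.bounded s ⟨ht01.1.trans hs.1.le, hs.2.trans ht'.2⟩ _ u hu _ ((hvc k).2 s)
  obtain ⟨y, -, σ, hσ, hlim⟩ := (isCompact_closedBall x (Mf * |t' - t|)).tendsto_subseq hball
  refine ⟨y, ?_, ?_⟩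
  · refine le_of_forall_pos_le_add fun ε hε => ?_
    have hcl := (hφ1 t' ⟨ht.1.trans ht'.1, ht'.2⟩).isClosed_preimage (ℓ + ε)
    have hev : ∀ᶠ k : ℕ in Filter.atTop, 1 / ((σ k : ℝ) + 1) < ε :=
      (tendsto_one_div_add_atTop_nhds_zero_nat.comp hσ.tendsto_atTop).eventually
        (gt_mem_nhds hε)
    refine hcl.mem_of_tendsto hlim (hev.mono fun k hk => ?_)
    have := hle (σ k)
    simp only [mem_preimage, mem_Iic, Function.comp]
    linarith
  · intro ε hε
    obtain ⟨k, hk⟩ := (hlim.eventually (ball_mem_nhds y hε)).exists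
    exact ⟨vc (σ k), hvc _, hk⟩

/-- Lemma 2: if `φ` satisfies (i) and (ii), then for every
`ℓ ≥ φ(t₀,x₀)` the level set `𝒲^φ_ℓ = {(t,x) ∈ [t₀,1] × ℝⁿ : φ(t,x) ≤ ℓ}`
satisfies P1 and P2. -/
theorem statement7 {n p q : ℕ}
    (f : ℝ → Evec n → Evec p → Evec q → Evec n)
    (U : Set (Evec p)) (V : Set (Evec q)) (Mf c : ℝ)
    (hA1 : Assumption1 f U V Mf c)
    (sol : ℝ → Evec n → (ℝ → Evec p) → (ℝ → Evec q) → ℝ → Evec n)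
    (hsol : IsSolOp f U V sol)
    (t₀ : ℝ) (ht₀ : t₀ ∈ Icc (0:ℝ) 1)
    (x₀ : Evec n)
    (φ : ℝ → Evec n → ℝ)
    (hφ1 : PhiI t₀ φ) (hφ2 : PhiII U V sol t₀ φ) :
    ∀ ℓ : ℝ, φ t₀ x₀ ≤ ℓ →
      PropP1 t₀ {z : ℝ × Evec n | z.1 ∈ Icc t₀ 1 ∧ φ z.1 z.2 ≤ ℓ} ∧
      PropP2 U V sol {z : ℝ × Evec n | z.1 ∈ Icc t₀ 1 ∧ φ z.1 z.2 ≤ ℓ} := by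
  intro ℓ hℓ
  refine ⟨fun t ht => ⟨?_, ?_⟩, ?_⟩
  · have : sec {z : ℝ × Evec n | z.1 ∈ Icc t₀ 1 ∧ φ z.1 z.2 ≤ ℓ} t = φ t ⁻¹' Iic ℓ := by
      ext x
      exact ⟨fun h => h.2, fun h => ⟨ht, h⟩⟩
    rw [this]
    exact (hφ1 t ht).isClosed_preimage ℓ
  · obtain ⟨u, hu⟩ := hA1.nonemptyU
    obtain ⟨y, hy, -⟩ := exists_limit_reply f U V Mf c hA1 sol hsol t₀ ht₀ φ hφ1 hφ2 ℓ t₀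
      ⟨le_rfl, ht₀.2⟩ x₀ hℓ t ht u hu
    exact ⟨y, ht, hy⟩
  · rintro t x ⟨ht, hx⟩ t' ht' u hu ε hε
    obtain ⟨y, hy, h⟩ := exists_limit_reply f U V Mf c hA1 sol hsol t₀ ht₀ φ hφ1 hφ2 ℓ t
      ht x hx t' ht' u hu
    obtain ⟨vc, hvc, hd⟩ := h ε hε
    refine ⟨vc, hvc, lt_of_le_of_lt (infDist_le_dist_of_mem ?_) hd⟩
    exact ⟨⟨le_trans ht.1 ht'.1, ht'.2⟩, hy⟩
end
end
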